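/- Let k be a field of characteristic p > 2 and V = V₀ ⊕ V₁ a finite-dimensional superspace. The symmetrization operator z ↦ Σ_{σ ∈ 𝔖_p} z·σ on V^{⊗p} (signed action) descends to a k-linear map α: 𝐒^p(V) → 𝚪^p(V) from the signed coinvariants to the signed invariants. The kernel of α is exactly the k-span of { v^p : v ∈ V₀ } (the images in 𝐒^p(V) of the tensors v^{⊗p} for even v), and the cokernel of α has k-dimension equal to dim_k V₀. -/

import Mathlib

open Finset

set_option synthInstance.maxHeartbeats 1000000
set_option maxHeartbeats 4000000

namespace Stmt13

variable {k : Type} [Field k]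
variable {V : Type} [AddCommGroup V] [Module k V]

/-- the number of inversions of the permutation `σ` in which both entries involved are
odd, for a tensor whose `i`-th slot has parity `ε i`; the Koszul sign is `(-1)` to this count -/
def signExp {d : ℕ} (σ : Equiv.Perm (Fin d)) (ε : Fin d → Bool) : ℕ :=
  ((univ ×ˢ univ).filter fun q : Fin d × Fin d =>
    q.1 < q.2 ∧ σ q.2 < σ q.1 ∧ ε (σ q.1) = true ∧ ε (σ q.2) = true).card

/-- the projection of `V = V₀ ⊕ V₁` onto its even (`false`) or odd (`true`) summand -/
noncomputable def prV (V₀ V₁ : Submodule k V) (hc : IsCompl V₀ V₁) : Bool → (V →ₗ[k] V)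
  | false => V₀.subtype ∘ₗ Submodule.linearProjOfIsCompl V₀ V₁ hc
  | true => V₁.subtype ∘ₗ Submodule.linearProjOfIsCompl V₁ V₀ hc.symm

/-- the `d`-th tensor power of `V` -/
abbrev TP (k : Type) [Field k] (V : Type) [AddCommGroup V] [Module k V] (d : ℕ) : Type :=
  PiTensorProduct k (fun _ : Fin d => V)

/-- the signed (right) action of `σ ∈ 𝔖_d` on `V^{⊗d}`: on tensors of homogeneous vectors,
the transposition `(i, i+1)` exchanges the `i`-th and `(i+1)`-th factors and multiplies by
`(-1)` if both are odd.  It is defined by decomposing each slot into its even and odd parts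
(the component with slot parities `ε`), permuting the factors, and multiplying by the
Koszul sign `(-1) ^ signExp σ ε`. -/
noncomputable def sAct (V₀ V₁ : Submodule k V) (hc : IsCompl V₀ V₁) {d : ℕ}
    (σ : Equiv.Perm (Fin d)) : TP k V d →ₗ[k] TP k V d :=
  ∑ ε : Fin d → Bool, ((-1 : k) ^ signExp σ ε) •
    ((PiTensorProduct.reindex k (fun _ : Fin d => V) (σ⁻¹ : Equiv.Perm (Fin d))).toLinearMap ∘ₗ
      PiTensorProduct.map (fun i => prV V₀ V₁ hc (ε i)))

/-- the pure tensor power `v^{⊗d}` -/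
noncomputable def tpowV (d : ℕ) (v : V) : TP k V d :=
  PiTensorProduct.tprod k (fun _ : Fin d => v)

/-- the relations defining the coinvariant space `𝐒^d(V)` -/
noncomputable def symRel (V₀ V₁ : Submodule k V) (hc : IsCompl V₀ V₁) (d : ℕ) :
    Submodule k (TP k V d) :=
  Submodule.span k {x | ∃ (z : TP k V d) (σ : Equiv.Perm (Fin d)), x = z - sAct V₀ V₁ hc σ z}

/-- the invariants `𝚪^d(V) = (V^{⊗d})^{𝔖_d}` for the signed action -/
noncomputable def gammaPow (V₀ V₁ : Submodule k V) (hc : IsCompl V₀ V₁) (d : ℕ) :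
    Submodule k (TP k V d) :=
  ⨅ σ : Equiv.Perm (Fin d), LinearMap.ker (sAct V₀ V₁ hc σ - LinearMap.id)

/-! ### Koszul signs -/

/-- Koszul sign -/
noncomputable def sg (k : Type) [Field k] {d : ℕ} (σ : Equiv.Perm (Fin d)) (ε : Fin d → Bool) : k :=
  (-1 : k) ^ signExp σ ε

/-- local contribution of a pair to the Koszul sign -/
noncomputable def loc (k : Type) [Field k] {d : ℕ} (σ : Equiv.Perm (Fin d)) (ε : Fin d → Bool)
    (q : Fin d × Fin d) : k :=
  if σ q.2 < σ q.1 ∧ ε (σ q.1) = true ∧ ε (σ q.2) = true then -1 else 1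

lemma sg_eq_prod {d : ℕ} (σ : Equiv.Perm (Fin d)) (ε : Fin d → Bool) :
    sg k σ ε = ∏ q ∈ (univ : Finset (Fin d × Fin d)).filter (fun q => q.1 < q.2), loc k σ ε q := by
  unfold sg signExp loc
  rw [Finset.prod_ite, Finset.prod_const_one, mul_one, Finset.prod_const, Finset.filter_filter]
  rfl

lemma sg_mul {d : ℕ} (σ τ : Equiv.Perm (Fin d)) (ε : Fin d → Bool) :
    sg k (σ * τ) ε = sg k σ ε * sg k τ (ε ∘ σ) := by
  have key : sg k σ ε = ∏ q ∈ (univ : Finset (Fin d × Fin d)).filter (fun q => q.1 < q.2),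
      loc k σ ε (if τ q.1 < τ q.2 then (τ q.1, τ q.2) else (τ q.2, τ q.1)) := by
    rw [sg_eq_prod]
    symm
    refine Finset.prod_nbij'
      (fun q => if τ q.1 < τ q.2 then (τ q.1, τ q.2) else (τ q.2, τ q.1))
      (fun q => if τ.symm q.1 < τ.symm q.2 then (τ.symm q.1, τ.symm q.2) else (τ.symm q.2, τ.symm q.1))
      ?_ ?_ ?_ ?_ ?_
    · rintro ⟨i, j⟩ h
      simp only [Finset.mem_filter, Finset.mem_univ, true_and] at h ⊢
      split_ifs with h1
      · exact h1
      · exact lt_of_le_of_ne (not_lt.1 h1) (fun e => h.ne' (τ.injective e))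
    · rintro ⟨i, j⟩ h
      simp only [Finset.mem_filter, Finset.mem_univ, true_and] at h ⊢
      split_ifs with h1
      · exact h1
      · exact lt_of_le_of_ne (not_lt.1 h1) (fun e => h.ne' (τ.symm.injective e))
    · rintro ⟨i, j⟩ h
      simp only [Finset.mem_filter, Finset.mem_univ, true_and] at h ⊢
      by_cases h1 : τ i < τ j
      · simp [h1, h]
      · simp [h1, not_lt.2 h.le]
    · rintro ⟨i, j⟩ h
      simp only [Finset.mem_filter, Finset.mem_univ, true_and] at h ⊢
      by_cases h1 : τ.symm i < τ.symm j
      · simp [h1, h]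
      · simp [h1, not_lt.2 h.le]
    · intros; rfl
  rw [key, sg_eq_prod, sg_eq_prod, ← Finset.prod_mul_distrib]
  refine Finset.prod_congr rfl ?_
  rintro ⟨i, j⟩ h
  simp only [Finset.mem_filter, Finset.mem_univ, true_and] at h
  have hne : τ i ≠ τ j := fun e => h.ne (τ.injective e)
  have hne2 : σ (τ i) ≠ σ (τ j) := fun e => hne (σ.injective e)
  unfold loc
  by_cases h1 : τ i < τ j
  · simp only [Equiv.Perm.coe_mul, Function.comp_apply, h1, if_true, not_lt.2 h1.le, false_and,
      if_false, mul_one]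
    congr 1
  · have h2 : τ j < τ i := lt_of_le_of_ne (not_lt.1 h1) hne.symm
    by_cases h3 : σ (τ i) < σ (τ j)
    · by_cases a : ε (σ (τ i)) = true <;> by_cases b : ε (σ (τ j)) = true <;>
        simp [h1, h2, h3, not_lt.2 h3.le, a, b]
    · have h4 : σ (τ j) < σ (τ i) := lt_of_le_of_ne (not_lt.1 h3) hne2.symm
      by_cases a : ε (σ (τ i)) = true <;> by_cases b : ε (σ (τ j)) = true <;>
        simp [h1, h2, h3, h4, a, b]

lemma sg_pm {d : ℕ} (σ : Equiv.Perm (Fin d)) (ε : Fin d → Bool) :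
    sg k σ ε = 1 ∨ sg k σ ε = -1 := neg_one_pow_eq_or k _

lemma sg_even {d : ℕ} (σ : Equiv.Perm (Fin d)) (ε : Fin d → Bool) (h : ∀ i, ε i = false) :
    sg k σ ε = 1 := by
  simp [sg, signExp, h]

lemma sg_odd {d : ℕ} (hd : 2 ≤ d) : ∃ σ : Equiv.Perm (Fin d), ∀ ε : Fin d → Bool,
    (∀ i, ε i = true) → sg k σ ε = -1 := by
  refine ⟨Equiv.swap ⟨0, by omega⟩ ⟨1, by omega⟩, fun ε h => ?_⟩
  have : signExp (Equiv.swap (⟨0, by omega⟩ : Fin d) ⟨1, by omega⟩) ε = 1 := by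
    unfold signExp
    rw [Finset.card_eq_one]
    refine ⟨(⟨0, by omega⟩, ⟨1, by omega⟩), ?_⟩
    ext ⟨⟨i, hi⟩, ⟨j, hj⟩⟩
    simp only [h, Finset.mem_filter, Finset.mem_product, Finset.mem_univ, Finset.mem_singleton,
      Equiv.swap_apply_def, Prod.mk.injEq, Fin.mk.injEq, and_true, true_and, Fin.mk_lt_mk]
    split_ifs <;> simp only [Fin.mk_lt_mk] <;> omega
  simp [sg, this]

/-! ### The signed action on homogeneous tensors -/

lemma prV_false (V₀ V₁ : Submodule k V) (hc : IsCompl V₀ V₁) (v : V) (hv : v ∈ V₀) :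
    prV V₀ V₁ hc false v = v ∧ prV V₀ V₁ hc true v = 0 := by
  constructor
  · have := Submodule.projectionOnto_apply_left hc ⟨v, hv⟩
    exact congrArg Subtype.val this
  · have := Submodule.projectionOnto_apply_right hc.symm ⟨v, hv⟩
    exact congrArg Subtype.val this

lemma prV_true (V₀ V₁ : Submodule k V) (hc : IsCompl V₀ V₁) (v : V) (hv : v ∈ V₁) :
    prV V₀ V₁ hc true v = v ∧ prV V₀ V₁ hc false v = 0 := by
  constructor
  · have := Submodule.projectionOnto_apply_left hc.symm ⟨v, hv⟩
    exact congrArg Subtype.val this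
  · have := Submodule.projectionOnto_apply_right hc ⟨v, hv⟩
    exact congrArg Subtype.val this

lemma sAct_tprod (V₀ V₁ : Submodule k V) (hc : IsCompl V₀ V₁) {d : ℕ}
    (σ : Equiv.Perm (Fin d)) (ε : Fin d → Bool) (v : Fin d → V)
    (h : ∀ i, prV V₀ V₁ hc (ε i) (v i) = v i ∧ prV V₀ V₁ hc (!ε i) (v i) = 0) :
    sAct V₀ V₁ hc σ (PiTensorProduct.tprod k v) =
      sg k σ ε • PiTensorProduct.tprod k (fun i => v (σ i)) := by
  unfold sAct
  rw [LinearMap.sum_apply, Finset.sum_eq_single ε]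
  · rw [LinearMap.smul_apply, LinearMap.comp_apply, PiTensorProduct.map_tprod]
    simp only [fun i => (h i).1]
    erw [PiTensorProduct.reindex_tprod]
    rfl
  · intro η _ hη
    obtain ⟨i, hi⟩ := Function.ne_iff.1 hη
    have hi' : η i = !ε i := by
      cases h1 : η i <;> cases h2 : ε i <;> simp_all
    rw [LinearMap.smul_apply, LinearMap.comp_apply, PiTensorProduct.map_tprod]
    have : PiTensorProduct.tprod k (fun i => prV V₀ V₁ hc (η i) (v i)) = 0 :=
      (PiTensorProduct.tprod k).map_coord_zero i (by rw [hi']; exact (h i).2)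
    rw [this, map_zero, smul_zero]
  · simp

/-! ### Stabilizers -/

lemma stab_card_ne (p : ℕ) [CharP k p] (hp : p.Prime) {ι : Type} [Fintype ι] [DecidableEq ι]
    (f : Fin p → ι) (hf : ∀ i, ∃ a, f a ≠ i) :
    ((Fintype.card {g : Equiv.Perm (Fin p) // f ∘ g = f} : ℕ) : k) ≠ 0 := by
  rw [DomMulAct.stabilizer_card, Ne, CharP.cast_eq_zero_iff k p, hp.prime.dvd_finsetProd_iff]
  rintro ⟨i, -, h⟩
  rw [hp.dvd_factorial] at h
  obtain ⟨a, ha⟩ := hf i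
  have := Fintype.card_subtype_lt (p := fun a => f a = i) ha
  rw [Fintype.card_fin] at this
  omega

/-! ### Monomial representations -/

/-- the signed permutation action on a space with a basis indexed by words -/
structure Mono (k : Type) [Field k] (p : ℕ) (ι T : Type) [AddCommGroup T] [Module k T] where
  /-- basis -/
  B : Module.Basis (Fin p → ι) k T
  /-- action -/
  A : Equiv.Perm (Fin p) → T →ₗ[k] T
  /-- parity -/
  ε : ι → Bool
  act : ∀ σ f, A σ (B f) = sg k σ (ε ∘ f) • B (f ∘ σ)

namespace Mono

variable {p : ℕ} {ι T : Type} [AddCommGroup T] [Module k T] (M : Mono k p ι T)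

lemma A_mul (σ τ : Equiv.Perm (Fin p)) (z : T) : M.A τ (M.A σ z) = M.A (σ * τ) z := by
  have : M.A τ ∘ₗ M.A σ = M.A (σ * τ) := by
    refine M.B.ext fun f => ?_
    rw [LinearMap.comp_apply, M.act, map_smul, M.act, M.act, smul_smul, sg_mul]
    rfl
  exact LinearMap.congr_fun this z

/-- symmetrization -/
noncomputable def N : T →ₗ[k] T := ∑ σ : Equiv.Perm (Fin p), M.A σ

lemma N_apply (z : T) : M.N z = ∑ σ : Equiv.Perm (Fin p), M.A σ z := by
  simp [N]

lemma A_N (τ : Equiv.Perm (Fin p)) (z : T) : M.A τ (M.N z) = M.N z := by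
  rw [N_apply, map_sum]
  simp only [A_mul]
  exact Equiv.sum_comp (Equiv.mulRight τ) (fun σ => M.A σ z)

lemma N_A (τ : Equiv.Perm (Fin p)) (z : T) : M.N (M.A τ z) = M.N z := by
  rw [N_apply, N_apply]
  simp only [A_mul]
  exact Equiv.sum_comp (Equiv.mulLeft τ) (fun σ => M.A σ z)

lemma comp_inj (σ : Equiv.Perm (Fin p)) (f g : Fin p → ι) (h : f ∘ σ = g ∘ σ) : f = g :=
  σ.surjective.injective_comp_right h

lemma repr_A (σ : Equiv.Perm (Fin p)) (f : Fin p → ι) (z : T) :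
    M.B.repr (M.A σ z) (f ∘ σ) = sg k σ (M.ε ∘ f) * M.B.repr z f := by
  classical
  have : (M.B.coord (f ∘ σ)) ∘ₗ M.A σ = sg k σ (M.ε ∘ f) • M.B.coord f := by
    refine M.B.ext fun g => ?_
    rw [LinearMap.comp_apply, M.act, map_smul, LinearMap.smul_apply, Module.Basis.coord_apply,
      Module.Basis.coord_apply, Module.Basis.repr_self, Module.Basis.repr_self,
      Finsupp.single_apply, Finsupp.single_apply]
    by_cases h : g = f
    · subst h; simp
    · have : ¬ (g ∘ σ = f ∘ σ) := fun e => h (comp_inj σ _ _ e)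
      simp [h, this]
  exact LinearMap.congr_fun this z

/-- orbit relation -/
def orb (p : ℕ) (ι : Type) : Setoid (Fin p → ι) where
  r f g := ∃ σ : Equiv.Perm (Fin p), g = f ∘ σ
  iseqv := ⟨fun f => ⟨1, rfl⟩, by
    rintro f g ⟨σ, rfl⟩
    exact ⟨σ⁻¹, by ext i; simp⟩, by
    rintro f g h ⟨σ, rfl⟩ ⟨τ, rfl⟩
    exact ⟨σ * τ, rfl⟩⟩

/-- orbit representative -/
noncomputable def rep (f : Fin p → ι) : Fin p → ι := (Quotient.mk (orb p ι) f).out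

lemma rep_spec (f : Fin p → ι) : ∃ σ : Equiv.Perm (Fin p), f = rep f ∘ σ :=
  Quotient.mk_out (s := orb p ι) f

lemma rep_comp (f : Fin p → ι) (σ : Equiv.Perm (Fin p)) : rep (f ∘ σ) = rep f := by
  unfold rep
  congr 1
  symm
  exact Quotient.sound (s := orb p ι) ⟨σ, rfl⟩

lemma rep_rep (f : Fin p → ι) : rep (rep f) = rep f := by
  obtain ⟨σ, h⟩ := rep_spec f
  conv_rhs => rw [h]
  rw [rep_comp]

/-- trivial stabilizer character -/
def Triv (f : Fin p → ι) : Prop :=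
  ∀ σ : Equiv.Perm (Fin p), f ∘ σ = f → sg k σ (M.ε ∘ f) = 1

lemma repr_N [DecidableEq ι] (w : T) (hw : ∀ f, M.B.repr w f ≠ 0 → rep f = f)
    (r : Fin p → ι) (hr : rep r = r) (ht : M.Triv r) :
    M.B.repr (M.N w) r =
      (Fintype.card {g : Equiv.Perm (Fin p) // r ∘ g = r} : ℕ) * M.B.repr w r := by
  rw [N_apply, map_sum, Finsupp.finsetSum_apply]
  have : ∀ σ : Equiv.Perm (Fin p), M.B.repr (M.A σ w) r =
      if r ∘ σ = r then M.B.repr w r else 0 := by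
    intro σ
    split_ifs with h
    · conv_lhs => rw [← h]
      rw [repr_A, ht σ h, one_mul]
    · have h1 : r = (r ∘ σ.symm) ∘ σ := by ext i; simp
      conv_lhs => rw [h1]
      rw [repr_A]
      by_contra hne
      have h2 := hw _ (right_ne_zero_of_mul hne)
      rw [rep_comp, hr] at h2
      apply h
      conv_lhs => rw [h2]
      exact h1.symm
  simp only [this]
  rw [← Finset.sum_filter, Finset.sum_const, nsmul_eq_mul, Fintype.card_subtype]

lemma not_triv {f : Fin p → ι} (h : ¬ M.Triv f) :
    ∃ σ : Equiv.Perm (Fin p), f ∘ σ = f ∧ sg k σ (M.ε ∘ f) = -1 := by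
  unfold Triv at h
  push Not at h
  obtain ⟨σ, h1, h2⟩ := h
  exact ⟨σ, h1, (sg_pm σ _).resolve_left h2⟩

lemma triv_const (hp : 2 ≤ p) (h2 : (2 : k) ≠ 0) (i : ι) (h : M.Triv (fun _ => i)) :
    M.ε i = false := by
  by_contra hi
  rw [Bool.not_eq_false] at hi
  obtain ⟨σ, hσ⟩ := sg_odd (k := k) hp
  have h1 := h σ rfl
  rw [hσ (M.ε ∘ fun _ => i) (fun _ => hi)] at h1
  apply h2
  linear_combination -h1

/-- the words that are constant equal to an even letter -/
def evenConst : Set (Fin p → ι) := {f | ∃ i, M.ε i = false ∧ f = fun _ => i}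

/-- a word with trivial character, not an even constant, has stabilizer order prime to `p` -/
lemma stab_ne [CharP k p] (hp : p.Prime) (h2 : (2 : k) ≠ 0) [Fintype ι] [DecidableEq ι]
    (f : Fin p → ι) (ht : M.Triv f) (hf : f ∉ M.evenConst) :
    ((Fintype.card {g : Equiv.Perm (Fin p) // f ∘ g = f} : ℕ) : k) ≠ 0 := by
  refine stab_card_ne p hp f fun i => ?_
  by_contra h
  push Not at h
  have hfi : f = fun _ => i := funext h
  exact hf ⟨i, M.triv_const hp.two_le h2 i (hfi ▸ ht), hfi⟩

lemma ker_le [CharP k p] (hp : p.Prime) (h2 : (2 : k) ≠ 0) [Fintype ι]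
    (R : Submodule k T) (hR : ∀ σ z, z - M.A σ z ∈ R) (hRN : ∀ x ∈ R, M.N x = 0)
    (z : T) (hz : M.N z = 0) : z ∈ R ⊔ Submodule.span k (M.B '' M.evenConst) := by
  classical
  have htop : (⊤ : Submodule k T) ≤ R ⊔ Submodule.span k (M.B '' {f | rep f = f}) := by
    rw [← M.B.span_eq, Submodule.span_le]
    rintro _ ⟨f, rfl⟩
    obtain ⟨σ, h⟩ := rep_spec f
    have h1 : M.B (rep f) ∈ Submodule.span k (M.B '' {f | rep f = f}) :=
      Submodule.subset_span ⟨_, rep_rep f, rfl⟩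
    have h3 := hR σ (M.B (rep f))
    rw [M.act, ← h] at h3
    have h4 : sg k σ (M.ε ∘ rep f) • M.B f ∈
        R ⊔ Submodule.span k (M.B '' {f | rep f = f}) := by
      have := Submodule.sub_mem _ (Submodule.mem_sup_right (S := R) h1)
        (Submodule.mem_sup_left h3)
      simpa using this
    have h5 : sg k σ (M.ε ∘ rep f) ≠ 0 := by
      rcases sg_pm (k := k) σ (M.ε ∘ rep f) with h | h <;> rw [h] <;> simp
    exact (Submodule.smul_mem_iff _ h5).1 h4
  obtain ⟨r, hr, w, hw, rfl⟩ := Submodule.mem_sup.1 (htop (Submodule.mem_top (x := z)))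
  rw [map_add, hRN r hr, zero_add] at hz
  rw [Module.Basis.mem_span_image] at hw
  have hw' : ∀ f, M.B.repr w f ≠ 0 → rep f = f := fun f hf => hw (by simpa using hf)
  refine Submodule.add_mem _ (Submodule.mem_sup_left hr) ?_
  rw [← M.B.sum_repr w]
  refine Submodule.sum_mem _ fun f _ => ?_
  by_cases h0 : M.B.repr w f = 0
  · rw [h0, zero_smul]; exact Submodule.zero_mem _
  refine Submodule.smul_mem _ _ ?_
  by_cases hf : f ∈ M.evenConst
  · exact Submodule.mem_sup_right (Submodule.subset_span ⟨f, hf, rfl⟩)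
  by_cases ht : M.Triv f
  · have := M.repr_N w hw' f (hw' f h0) ht
    rw [hz, map_zero, Finsupp.zero_apply] at this
    exact absurd this.symm (mul_ne_zero (M.stab_ne hp h2 f ht hf) h0)
  · obtain ⟨σ, h3, h4⟩ := M.not_triv ht
    have h5 := hR σ (M.B f)
    rw [M.act, h3, h4, neg_one_smul, sub_neg_eq_add, ← two_smul k] at h5
    exact Submodule.mem_sup_left ((Submodule.smul_mem_iff _ h2).1 h5)

lemma inv_not_triv (h2 : (2 : k) ≠ 0) (z : T) (hz : ∀ σ, M.A σ z = z) (f : Fin p → ι)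
    (ht : ¬ M.Triv f) : M.B.repr z f = 0 := by
  obtain ⟨σ, h3, h4⟩ := M.not_triv ht
  have h5 := M.repr_A σ f z
  rw [hz, h3, h4] at h5
  have : 2 * M.B.repr z f = 0 := by linear_combination h5
  exact (mul_eq_zero.1 this).resolve_left h2

lemma inv_mem [CharP k p] (hp : p.Prime) (h2 : (2 : k) ≠ 0) [Fintype ι]
    (z : T) (hz : ∀ σ, M.A σ z = z) (h0 : ∀ f ∈ M.evenConst, M.B.repr z f = 0) :
    ∃ y, M.N y = z := by
  classical
  let c : (Fin p → ι) → k := fun f => if rep f = f then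
    ((Fintype.card {g : Equiv.Perm (Fin p) // f ∘ g = f} : ℕ) : k)⁻¹ * M.B.repr z f else 0
  let y : T := M.B.equivFun.symm c
  have hy : ∀ f, M.B.repr y f = c f := fun f => by
    rw [← M.B.equivFun_apply, LinearEquiv.apply_symm_apply]
  have hy' : ∀ f, M.B.repr y f ≠ 0 → rep f = f := by
    intro f hf
    rw [hy] at hf
    by_contra hn
    exact hf (if_neg hn)
  refine ⟨y, ?_⟩
  have hN : ∀ σ, M.A σ (M.N y) = M.N y := fun σ => M.A_N σ y
  have hrep : ∀ f, rep f = f → M.B.repr (M.N y) f = M.B.repr z f := by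
    intro f hf
    by_cases ht : M.Triv f
    · rw [M.repr_N y hy' f hf ht, hy]
      simp only [c, if_pos hf]
      by_cases he : f ∈ M.evenConst
      · rw [h0 f he]; simp
      · rw [mul_inv_cancel_left₀ (M.stab_ne hp h2 f ht he)]
    · rw [M.inv_not_triv h2 _ hN f ht, M.inv_not_triv h2 _ hz f ht]
  refine M.B.ext_elem fun f => ?_
  obtain ⟨σ, h⟩ := rep_spec f
  have e1 := M.repr_A σ (rep f) (M.N y)
  have e2 := M.repr_A σ (rep f) z
  rw [hN, ← h] at e1
  rw [hz, ← h] at e2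
  rw [e1, e2, hrep _ (rep_rep f)]

lemma fact_zero [CharP k p] (hp : p.Prime) :
    ((Fintype.card (Equiv.Perm (Fin p)) : ℕ) : k) = 0 := by
  rw [Fintype.card_perm, Fintype.card_fin, CharP.cast_eq_zero_iff k p]
  exact hp.dvd_factorial.2 le_rfl

lemma repr_N_const [CharP k p] (hp : p.Prime) (z : T) (f : Fin p → ι) (hf : f ∈ M.evenConst) :
    M.B.repr (M.N z) f = 0 := by
  obtain ⟨i, hi, rfl⟩ := hf
  rw [N_apply, map_sum, Finsupp.finsetSum_apply]
  have : ∀ σ : Equiv.Perm (Fin p), M.B.repr (M.A σ z) (fun _ => i) =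
      M.B.repr z (fun _ => i) := by
    intro σ
    have := M.repr_A σ (fun _ => i) z
    rw [sg_even σ (M.ε ∘ fun _ => i) (fun _ => hi), one_mul] at this
    exact this
  simp only [this]
  rw [Finset.sum_const, nsmul_eq_mul, Finset.card_univ, fact_zero hp, zero_mul]

end Mono

/-- Let `k` be a field of characteristic `p > 2` and `V = V₀ ⊕ V₁` a
finite-dimensional superspace.  The symmetrization operator `z ↦ ∑_{σ ∈ 𝔖_p} z·σ` descends
to a `k`-linear map `α : 𝐒^p(V) → 𝚪^p(V)` from the signed coinvariants to the signed
invariants; its kernel is exactly the span of `{v^p : v ∈ V₀}`, and its cokernel has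
dimension `dim_k V₀`. -/
theorem statement13 (k : Type) [Field k] (p : ℕ) [CharP k p] (hp : p.Prime) (hp2 : 2 < p)
    (V : Type) [AddCommGroup V] [Module k V] [FiniteDimensional k V]
    (V₀ V₁ : Submodule k V) (hc : IsCompl V₀ V₁) :
    ∃ α : (TP k V p ⧸ symRel V₀ V₁ hc p) →ₗ[k] ↥(gammaPow V₀ V₁ hc p),
      (∀ z : TP k V p,
        ((α (Submodule.Quotient.mk z) : ↥(gammaPow V₀ V₁ hc p)) : TP k V p) =
          ∑ σ : Equiv.Perm (Fin p), sAct V₀ V₁ hc σ z) ∧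
      LinearMap.ker α =
        Submodule.span k {x | ∃ v ∈ V₀, x = Submodule.Quotient.mk (tpowV p v)} ∧
      Module.finrank k (↥(gammaPow V₀ V₁ hc p) ⧸ LinearMap.range α) =
        Module.finrank k ↥V₀ := by
  classical
  have h2 : (2 : k) ≠ 0 := by
    have := (CharP.cast_eq_zero_iff k p 2).not.2 (Nat.not_dvd_of_pos_of_lt (by norm_num) hp2)
    exact_mod_cast this
  let b₀ := Module.finBasis k V₀
  let b₁ := Module.finBasis k V₁
  let b := (b₀.prod b₁).map (Submodule.prodEquivOfIsCompl V₀ V₁ hc)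
  have hb0 : ∀ i, b (Sum.inl i) = b₀ i := fun i => by simp [b]
  have hb1 : ∀ i, b (Sum.inr i) = b₁ i := fun i => by simp [b]
  have hpr : ∀ i, prV V₀ V₁ hc (Sum.isRight i) (b i) = b i ∧
      prV V₀ V₁ hc (!Sum.isRight i) (b i) = 0 := by
    rintro (i | i)
    · rw [hb0]; exact prV_false V₀ V₁ hc _ (b₀ i).2
    · rw [hb1]; exact prV_true V₀ V₁ hc _ (b₁ i).2
  let M : Mono k p (Fin (Module.finrank k V₀) ⊕ Fin (Module.finrank k V₁)) (TP k V p) :=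
    { B := Basis.piTensorProduct (fun _ => b)
      A := fun σ => sAct V₀ V₁ hc σ
      ε := Sum.isRight
      act := by
        intro σ f
        rw [Basis.piTensorProduct_apply, Basis.piTensorProduct_apply]
        exact sAct_tprod V₀ V₁ hc σ (Sum.isRight ∘ f) (fun i => b (f i)) (fun i => hpr (f i)) }
  have hMB : ∀ i, M.B (fun _ => i) = tpowV p (b i) := fun i =>
    Basis.piTensorProduct_apply _ _
  have hMA : ∀ σ, M.A σ = sAct V₀ V₁ hc σ := fun σ => rfl
  have hΓ : ∀ z, z ∈ gammaPow V₀ V₁ hc p ↔ ∀ σ, M.A σ z = z := by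
    intro z
    simp [gammaPow, Submodule.mem_iInf, sub_eq_zero, hMA]
  have hRN : symRel V₀ V₁ hc p ≤ LinearMap.ker M.N := by
    refine Submodule.span_le.2 ?_
    rintro _ ⟨z, σ, rfl⟩
    change M.N (z - M.A σ z) = 0
    rw [map_sub, M.N_A, sub_self]
  have hR : ∀ σ z, z - M.A σ z ∈ symRel V₀ V₁ hc p := fun σ z =>
    Submodule.subset_span ⟨z, σ, rfl⟩
  let N' : TP k V p →ₗ[k] gammaPow V₀ V₁ hc p :=
    M.N.codRestrict _ (fun z => (hΓ _).2 fun σ => M.A_N σ z)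
  have hN' : symRel V₀ V₁ hc p ≤ LinearMap.ker N' := by
    rw [LinearMap.ker_codRestrict]; exact hRN
  let α := (symRel V₀ V₁ hc p).liftQ N' hN'
  have hα : ∀ z, ((α (Submodule.Quotient.mk z) : ↥(gammaPow V₀ V₁ hc p)) : TP k V p) = M.N z :=
    fun z => rfl
  have heven : ∀ f ∈ M.evenConst, ∃ i, f = fun _ => Sum.inl i := by
    rintro f ⟨i | i, h, rfl⟩
    · exact ⟨i, rfl⟩
    · cases h
  have heven' : ∀ i, (fun _ => Sum.inl i) ∈ M.evenConst := fun i => ⟨Sum.inl i, rfl, rfl⟩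
  have hpow : ∀ v ∈ V₀, ∀ σ, M.A σ (tpowV p v) = tpowV p v := by
    intro v hv σ
    have := sAct_tprod V₀ V₁ hc σ (fun _ => false) (fun _ => v)
      (fun _ => prV_false V₀ V₁ hc v hv)
    rw [sg_even σ _ (fun _ => rfl), one_smul] at this
    exact this
  refine ⟨α, fun z => (hα z).trans (M.N_apply z), ?_, ?_⟩
  · apply le_antisymm
    · intro x hx
      obtain ⟨z, rfl⟩ := Submodule.Quotient.mk_surjective _ x
      have hz : M.N z = 0 := by
        rw [← hα, LinearMap.mem_ker.1 hx]; rfl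
      have h := M.ker_le hp h2 _ hR (fun x hx => hRN hx) z hz
      obtain ⟨r, hr, w, hw, rfl⟩ := Submodule.mem_sup.1 h
      rw [Submodule.Quotient.mk_add, (Submodule.Quotient.mk_eq_zero _).2 hr, zero_add]
      have : Submodule.span k (M.B '' M.evenConst) ≤
          (Submodule.span k {x | ∃ v ∈ V₀, x = Submodule.Quotient.mk (tpowV p v)}).comap
            (symRel V₀ V₁ hc p).mkQ := by
        refine Submodule.span_le.2 ?_
        rintro _ ⟨f, hf, rfl⟩
        obtain ⟨i, rfl⟩ := heven f hf
        refine Submodule.subset_span ⟨b₀ i, (b₀ i).2, ?_⟩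
        rw [hMB, hb0]; rfl
      exact this hw
    · refine Submodule.span_le.2 ?_
      rintro _ ⟨v, hv, rfl⟩
      refine LinearMap.mem_ker.2 (Subtype.ext ?_)
      rw [hα, M.N_apply]
      simp only [hpow v hv]
      rw [Finset.sum_const, ← Nat.cast_smul_eq_nsmul k, Finset.card_univ, Mono.fact_zero hp,
        zero_smul]
      rfl
  · let φ : gammaPow V₀ V₁ hc p →ₗ[k] (Fin (Module.finrank k V₀) → k) :=
      LinearMap.pi fun i => M.B.coord (fun _ => Sum.inl i) ∘ₗ (gammaPow V₀ V₁ hc p).subtype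
    have hφ : ∀ z i, φ z i = M.B.repr (z : TP k V p) (fun _ => Sum.inl i) := fun z i => rfl
    have hker : LinearMap.range α = LinearMap.ker φ := by
      apply le_antisymm
      · rintro _ ⟨x, rfl⟩
        obtain ⟨z, rfl⟩ := Submodule.Quotient.mk_surjective _ x
        refine LinearMap.mem_ker.2 (funext fun i => ?_)
        rw [hφ, hα]
        exact M.repr_N_const hp z _ (heven' i)
      · intro z hz
        obtain ⟨y, hy⟩ := M.inv_mem hp h2 (z : TP k V p) ((hΓ _).1 z.2) (by
          intro f hf
          obtain ⟨i, rfl⟩ := heven f hf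
          rw [← hφ, LinearMap.mem_ker.1 hz]; rfl)
        exact ⟨Submodule.Quotient.mk y, Subtype.ext ((hα y).trans hy)⟩
    have hsurj : Function.Surjective φ := by
      rw [← LinearMap.range_eq_top, eq_top_iff, ← (Pi.basisFun k _).span_eq, Submodule.span_le]
      rintro _ ⟨i, rfl⟩
      refine ⟨⟨tpowV p (b₀ i), (hΓ _).2 (hpow _ (b₀ i).2)⟩, funext fun j => ?_⟩
      rw [hφ]
      change M.B.repr (tpowV p (b₀ i : V)) _ = _
      rw [← hb0, ← hMB, Module.Basis.repr_self, Finsupp.single_apply, Pi.basisFun_apply,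
        Pi.single_apply]
      have : NeZero p := ⟨hp.ne_zero⟩
      by_cases h : j = i
      · subst h; simp
      · rw [if_neg h, if_neg]
        intro e
        exact h (Sum.inl_injective (congrFun e 0)).symm
    rw [hker, (φ.quotKerEquivOfSurjective hsurj).finrank_eq, Module.finrank_fin_fun]

end Stmt13
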